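/- Let R be a commutative ring, n ≥ 3, and α, β ∈ SL_n(R). If α (or β) is homotopic to the identity, then αβ = βαε for some ε ∈ E_n(R). -/

import Mathlib

open Matrix Polynomial

/-- `ElemGroup R n` is the elementary subgroup `E_n(R)`: generated by the elementary
matrices `e_ij(λ) = I + λ E_ij`, `i ≠ j`. -/
def ElemGroup (R : Type*) [CommRing R] (n : ℕ) : Submonoid (Matrix (Fin n) (Fin n) R) :=
  Submonoid.closure {A | ∃ (i j : Fin n) (c : R), i ≠ j ∧ A = Matrix.transvection i j c}

/-- A matrix `α ∈ SL_n(R)` is homotopic to the identity if there is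
`γ(X) ∈ SL_n(R[X])` with `γ(0) = I` and `γ(1) = α`. -/
def HomotopicToId {R : Type*} [CommRing R] {n : ℕ} (α : Matrix (Fin n) (Fin n) R) : Prop :=
  ∃ γ : Matrix (Fin n) (Fin n) (Polynomial R),
    γ.det = 1 ∧ γ.map (Polynomial.eval 0) = 1 ∧ γ.map (Polynomial.eval 1) = α

namespace HC

variable {R : Type*} [CommRing R] {n : ℕ}

lemma trans_mem {i j : Fin n} (h : i ≠ j) (c : R) : transvection i j c ∈ ElemGroup R n :=
  Submonoid.subset_closure ⟨i, j, c, h, rfl⟩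

lemma single_eq (i j : Fin n) (c : R) :
    (Matrix.single i j c : Matrix (Fin n) (Fin n) R) =
      vecMulVec (Pi.single i c) (Pi.single j 1) := by
  ext a b
  simp [vecMulVec_apply, Matrix.single_apply, Pi.single_apply]
  grind

lemma single_eq' (i j : Fin n) (c : R) :
    (Matrix.single i j c : Matrix (Fin n) (Fin n) R) =
      vecMulVec (Pi.single i 1) (Pi.single j c) := by
  ext a b
  simp [vecMulVec_apply, Matrix.single_apply, Pi.single_apply]
  grind

/-- product of two rank one perturbations -/
lemma mul_rank (p q p' q' : Fin n → R) (h : q ⬝ᵥ p' = 0) :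
    (1 + vecMulVec p q) * (1 + vecMulVec p' q') = 1 + vecMulVec p q + vecMulVec p' q' := by
  rw [mul_add, add_mul _ _ (vecMulVec p' q'), vecMulVec_mul_vecMulVec, h]
  simp

lemma col_mem (l : Fin n) (p : Fin n → R) (hp : p l = 0) :
    1 + vecMulVec p (Pi.single l 1) ∈ ElemGroup R n := by
  have key : ∀ s : Finset (Fin n), l ∉ s →
      1 + vecMulVec (∑ i ∈ s, Pi.single i (p i)) (Pi.single l 1) ∈ ElemGroup R n := by
    intro s
    induction s using Finset.induction_on with
    | empty => intro _; simp
    | insert a s ha ih =>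
      intro hl
      have h1 : l ≠ a := fun h => hl (h ▸ Finset.mem_insert_self _ _)
      have h2 : l ∉ s := fun h => hl (Finset.mem_insert_of_mem h)
      have := mul_mem (trans_mem h1.symm (p a)) (ih h2)
      rw [transvection, single_eq, mul_rank] at this
      · rw [Finset.sum_insert ha, add_vecMulVec, ← add_assoc]
        exact this
      · simp only [single_dotProduct, one_mul, Finset.sum_apply]
        apply Finset.sum_eq_zero
        intro x hx
        rw [Pi.single_apply, if_neg]
        rintro rfl; exact h2 hx
  have := key (Finset.univ.erase l) (by simp)
  convert this using 3
  ext x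
  simp only [Finset.sum_apply, Pi.single_apply]
  by_cases hx : x = l <;> simp [hx, hp]

lemma row_mem (l : Fin n) (p : Fin n → R) (hp : p l = 0) :
    1 + vecMulVec (Pi.single l 1) p ∈ ElemGroup R n := by
  have key : ∀ s : Finset (Fin n), l ∉ s →
      1 + vecMulVec (Pi.single l 1) (∑ i ∈ s, Pi.single i (p i)) ∈ ElemGroup R n := by
    intro s
    induction s using Finset.induction_on with
    | empty => intro _; simp
    | insert a s ha ih =>
      intro hl
      have h1 : l ≠ a := fun h => hl (h ▸ Finset.mem_insert_self _ _)
      have h2 : l ∉ s := fun h => hl (Finset.mem_insert_of_mem h)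
      have := mul_mem (trans_mem h1 (p a)) (ih h2)
      rw [transvection, single_eq', mul_rank] at this
      · rw [Finset.sum_insert ha, vecMulVec_add, ← add_assoc]
        exact this
      · simp [h1.symm]
  have := key (Finset.univ.erase l) (by simp)
  convert this using 3
  ext x
  simp only [Finset.sum_apply, Pi.single_apply]
  by_cases hx : x = l <;> simp [hx, hp]

lemma rank_mem_aux (l : Fin n) (p q : Fin n → R) (hp : p l = 0) (hq : q l = 0)
    (h : q ⬝ᵥ p = 0) : 1 + vecMulVec p q ∈ ElemGroup R n := by
  have h1 := col_mem l p hp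
  have h2 := row_mem l q hq
  have h3 := col_mem l (-p) (by simp [hp])
  have h4 := row_mem l (-q) (by simp [hq])
  have := mul_mem (mul_mem h1 h2) (mul_mem h3 h4)
  convert this using 1
  have hPQ : vecMulVec p q = vecMulVec p (Pi.single l 1) * vecMulVec (Pi.single l 1) q := by
    simp [vecMulVec_mul_vecMulVec]
  have hPP : vecMulVec p (Pi.single l 1) * vecMulVec p (Pi.single l 1) = 0 := by
    simp [vecMulVec_mul_vecMulVec, hp]
  have hQQ : vecMulVec (Pi.single l 1) q * vecMulVec (Pi.single l 1) q = 0 := by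
    simp [vecMulVec_mul_vecMulVec, hq]
  have hQP : vecMulVec (Pi.single l 1) q * vecMulVec p (Pi.single l 1) = 0 := by
    simp [vecMulVec_mul_vecMulVec, h]
  rw [hPQ, neg_vecMulVec, vecMulVec_neg]
  generalize vecMulVec p (Pi.single l 1) = P at *
  generalize vecMulVec (Pi.single l 1) q = Q at *
  have h5 : P * (P * Q) = 0 := by rw [← mul_assoc, hPP, zero_mul]
  have h6 : Q * (P * Q) = 0 := by rw [← mul_assoc, hQP, zero_mul]
  simp only [mul_add, add_mul, mul_neg, neg_mul, mul_one, one_mul, mul_assoc, hPP, hQQ, hQP, h5,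
    h6, mul_zero, add_zero]
  abel

lemma rank_mem_two (hn : 3 ≤ n) (v : Fin n → R) (i j : Fin n) (c : R) :
    1 + vecMulVec v (Pi.single i (c * v j) - Pi.single j (c * v i)) ∈ ElemGroup R n := by
  obtain ⟨l, hl⟩ : ∃ l : Fin n, l ∉ ({i, j} : Finset (Fin n)) := by
    by_contra! h
    have := Finset.card_le_card (fun x _ => h x : (Finset.univ : Finset (Fin n)) ⊆ {i, j})
    have h2 := Finset.card_le_two (a := i) (b := j)
    simp at this
    omega
  simp only [Finset.mem_insert, Finset.mem_singleton, not_or] at hl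
  set w : Fin n → R := Pi.single i (c * v j) - Pi.single j (c * v i) with hw
  have hwl : w l = 0 := by simp [hw, hl.1, hl.2]
  have hwv : w ⬝ᵥ v = 0 := by simp [hw, sub_dotProduct]; ring
  have hwp : w ⬝ᵥ (v - Pi.single l (v l)) = 0 := by
    simp [dotProduct_sub, hwv, hwl]
  have h1 := rank_mem_aux l (v - Pi.single l (v l)) w (by simp) hwl hwp
  have h2 := row_mem l (v l • w) (by simp [hwl])
  have := mul_mem h2 h1
  rw [mul_rank _ _ _ _ (by rw [smul_dotProduct, hwp, smul_zero])] at this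
  convert this using 1
  rw [sub_vecMulVec, vecMulVec_smul, ← smul_vecMulVec, ← Pi.single_smul]
  simp

lemma rank_mem (hn : 3 ≤ n) (u v w : Fin n → R) (h : w ⬝ᵥ v = 0) :
    1 + vecMulVec v ((u ⬝ᵥ v) • w) ∈ ElemGroup R n := by
  have key : ∀ s : Finset (Fin n × Fin n),
      1 + vecMulVec v (∑ x ∈ s, (Pi.single x.1 (w x.1 * u x.2 * v x.2)
        - Pi.single x.2 (w x.1 * u x.2 * v x.1))) ∈ ElemGroup R n := by
    intro s
    induction s using Finset.induction_on with
    | empty => simp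
    | insert a s ha ih =>
      have := mul_mem (rank_mem_two hn v a.1 a.2 (w a.1 * u a.2)) ih
      rw [mul_rank] at this
      · rw [Finset.sum_insert ha, vecMulVec_add, ← add_assoc]
        exact this
      · simp [sub_dotProduct]; ring
  convert key Finset.univ using 3
  ext k
  simp only [Fintype.sum_prod_type, Finset.sum_apply, Pi.sub_apply, Pi.smul_apply, smul_eq_mul,
    Finset.sum_sub_distrib, Pi.single_apply]
  simp only [Finset.sum_ite_eq, Finset.mem_univ, if_true]
  rw [Finset.sum_comm]
  simp only [Finset.sum_ite_eq, Finset.mem_univ, if_true]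
  have e1 : ∑ x, w k * u x * v x = (u ⬝ᵥ v) * w k := by
    simp only [dotProduct, Finset.sum_mul]
    exact Finset.sum_congr rfl fun _ _ => by ring
  have e2 : ∑ x, w x * u k * v x = (w ⬝ᵥ v) * u k := by
    simp only [dotProduct, Finset.sum_mul]
    exact Finset.sum_congr rfl fun _ _ => by ring
  rw [e1, e2, h]; simp

lemma det_mem {x : Matrix (Fin n) (Fin n) R} (hx : x ∈ ElemGroup R n) : x.det = 1 := by
  induction hx using Submonoid.closure_induction with
  | mem x hx => obtain ⟨i, j, c, h, rfl⟩ := hx; exact det_transvection_of_ne i j h c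
  | one => simp
  | mul x y _ _ hx hy => simp [hx, hy]

lemma exists_inv {x : Matrix (Fin n) (Fin n) R} (hx : x ∈ ElemGroup R n) :
    ∃ y ∈ ElemGroup R n, y * x = 1 := by
  induction hx using Submonoid.closure_induction with
  | mem x hx =>
    obtain ⟨i, j, c, h, rfl⟩ := hx
    refine ⟨transvection i j (-c), trans_mem h _, ?_⟩
    rw [transvection_mul_transvection_same i j h]; simp
  | one => exact ⟨1, one_mem _, by simp⟩
  | mul x y _ _ hx hy =>
    obtain ⟨a, ha, ha'⟩ := hx
    obtain ⟨b, hb, hb'⟩ := hy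
    refine ⟨b * a, mul_mem hb ha, ?_⟩
    rw [mul_assoc, ← mul_assoc a, ha', one_mul, hb']

lemma of_mul_mem {x y : Matrix (Fin n) (Fin n) R} (hx : x ∈ ElemGroup R n)
    (h : x * y ∈ ElemGroup R n) : y ∈ ElemGroup R n := by
  obtain ⟨z, hz, hz'⟩ := exists_inv hx
  have := mul_mem hz h
  rwa [← mul_assoc, hz', one_mul] at this

lemma local_mem [IsLocalRing R] (U : Finset (Fin n)) : ∀ M : Matrix (Fin n) (Fin n) R, M.det = 1 →
    (∀ j, j ∉ U → ∀ i, M i j = (1 : Matrix (Fin n) (Fin n) R) i j) → M ∈ ElemGroup R n := by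
  induction U using Finset.induction_on with
  | empty =>
    intro M _ h
    have : M = 1 := by ext i j; exact h j (by simp) i
    rw [this]; exact one_mem _
  | insert k U hk ih =>
    -- the pivot is already one
    have clear : ∀ M : Matrix (Fin n) (Fin n) R, M.det = 1 →
        (∀ j, j ∉ insert k U → ∀ i, M i j = (1 : Matrix (Fin n) (Fin n) R) i j) → M k k = 1 →
        M ∈ ElemGroup R n := by
      intro M hM h hkk
      have he := col_mem k (fun i => if i = k then 0 else -M i k) (by simp)
      refine of_mul_mem he (ih _ (by rw [det_mul, det_mem he, hM, one_mul]) ?_)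
      intro j hj i
      have hij : ((1 + vecMulVec (fun i => if i = k then 0 else -M i k) (Pi.single k 1)) * M) i j
          = M i j + (if i = k then 0 else -M i k) * M k j := by
        simp [add_mul, vecMulVec_mul, vecMulVec_apply]
      rw [hij]
      by_cases hjk : j = k
      · subst hjk
        by_cases hi : i = j
        · subst hi; simp [hkk]
        · simp [hi, hkk]
      · have hj' : j ∉ insert k U := by simp [hjk, hj]
        rw [h j hj' i, h j hj' k, one_apply_ne (Ne.symm hjk)]; simp
    intro M hM h
    rcases U.eq_empty_or_nonempty with rfl | ⟨l, hl⟩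
    · apply clear M hM h
      have : M = (1 : Matrix (Fin n) (Fin n) R).updateCol k (fun i => M i k) := by
        ext i j
        by_cases hj : j = k
        · subst hj; simp
        · rw [updateCol_ne hj]; exact h j (by simp [hj]) i
      rw [this, ← cramer_apply, cramer_one] at hM
      simpa using hM
    · have hlk : l ≠ k := by rintro rfl; exact hk hl
      -- preservation of the shape
      have shape : ∀ M : Matrix (Fin n) (Fin n) R,
          (∀ j, j ∉ insert k U → ∀ i, M i j = (1 : Matrix (Fin n) (Fin n) R) i j) →
          ∀ (a b : Fin n) (c : R), b ∈ insert k U →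
          (∀ j, j ∉ insert k U → ∀ i, (transvection a b c * M) i j =
            (1 : Matrix (Fin n) (Fin n) R) i j) := by
        intro M h a b c hb j hj i
        by_cases hi : i = a
        · subst hi
          rw [transvection_mul_apply_same, h j hj, h j hj, one_apply_ne (i := b)]
          · simp
          · rintro rfl; exact hj hb
        · rw [transvection_mul_apply_of_ne _ _ _ _ hi, h j hj]
      have stepB : ∀ M : Matrix (Fin n) (Fin n) R, M.det = 1 →
          (∀ j, j ∉ insert k U → ∀ i, M i j = (1 : Matrix (Fin n) (Fin n) R) i j) →
          ∀ i ∈ insert k U, i ≠ k → IsUnit (M i k) → M ∈ ElemGroup R n := by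
        intro M hM h i hi hik hu
        obtain ⟨v, hv⟩ := hu.exists_left_inv
        have ht := trans_mem (R := R) hik.symm ((1 - M k k) * v)
        refine of_mul_mem ht (clear _ (by rw [det_mul, det_mem ht, hM, one_mul])
          (shape M h _ _ _ hi) ?_)
        rw [transvection_mul_apply_same, mul_assoc, hv]; ring
      obtain ⟨i, hi, hu⟩ : ∃ i ∈ insert k U, IsUnit (M i k) := by
        by_contra! hcon
        have hNM : M.adjugate * M = 1 := by rw [adjugate_mul, hM, one_smul]
        have h1 : ∑ i, M.adjugate k i * M i k = 1 := by
          have := congrFun (congrFun hNM k) k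
          rwa [mul_apply, one_apply_eq] at this
        have h2 : (1 : R) ∈ IsLocalRing.maximalIdeal R := by
          rw [← h1]
          apply Ideal.sum_mem
          intro i _
          by_cases hi : i ∈ insert k U
          · exact Ideal.mul_mem_left _ _ (hcon i hi)
          · have h3 : M.adjugate k i = 0 := by
              have := congrFun (congrFun hNM k) i
              rw [mul_apply, Finset.sum_congr rfl (fun j _ => by rw [h i hi j]), ← mul_apply,
                mul_one, one_apply_ne] at this
              · exact this
              · rintro rfl; simp at hi
            rw [h3]; simp
        exact (Ideal.ne_top_iff_one _).1 (IsLocalRing.maximalIdeal.isMaximal R).ne_top h2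
      by_cases hik : i = k
      · subst hik
        obtain ⟨v, hv⟩ := hu.exists_left_inv
        have ht := trans_mem (R := R) hlk ((1 - M l i) * v)
        refine of_mul_mem ht (stepB _ (by rw [det_mul, det_mem ht, hM, one_mul])
          (shape M h _ _ _ hi) l (Finset.mem_insert_of_mem hl) hlk ?_)
        rw [transvection_mul_apply_same, mul_assoc, hv]; simp
      · exact stepB M hM h i hi hik hu

/-- elementary subgroup as a subgroup of `SL`. -/
def EG (R : Type*) [CommRing R] (n : ℕ) : Subgroup (SpecialLinearGroup (Fin n) R) where
  carrier := {A | (A : Matrix (Fin n) (Fin n) R) ∈ ElemGroup R n}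
  mul_mem' := by intro a b ha hb; simpa using mul_mem ha hb
  one_mem' := by simp
  inv_mem' := by
    intro a ha
    obtain ⟨y, hy, hy'⟩ := exists_inv ha
    have h2 : a.1 * (a⁻¹).1 = 1 := congrArg Subtype.val (mul_inv_cancel a)
    have : ((a⁻¹ : SpecialLinearGroup (Fin n) R) : Matrix (Fin n) (Fin n) R) = y := by
      rw [← one_mul ((a⁻¹ : SpecialLinearGroup (Fin n) R) : Matrix (Fin n) (Fin n) R), ← hy',
        mul_assoc, h2, mul_one]
    change ((a⁻¹ : SpecialLinearGroup (Fin n) R) : Matrix (Fin n) (Fin n) R) ∈ ElemGroup R n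
    rw [this]; exact hy

lemma mem_EG {A : SpecialLinearGroup (Fin n) R} :
    A ∈ EG R n ↔ (A : Matrix (Fin n) (Fin n) R) ∈ ElemGroup R n := Iff.rfl

lemma tv_mem {i j : Fin n} (h : i ≠ j) (c : R) : SpecialLinearGroup.transvection h c ∈ EG R n :=
  trans_mem h c

lemma EG_le (K : Subgroup (SpecialLinearGroup (Fin n) R))
    (h : ∀ (i j : Fin n) (hij : i ≠ j) (c : R), SpecialLinearGroup.transvection hij c ∈ K) :
    EG R n ≤ K := by
  intro A hA
  have key : ∀ x ∈ ElemGroup R n, ∃ B ∈ K, (B : Matrix (Fin n) (Fin n) R) = x := by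
    intro x hx
    induction hx using Submonoid.closure_induction with
    | mem x hx => obtain ⟨i, j, c, hij, rfl⟩ := hx; exact ⟨_, h i j hij c, rfl⟩
    | one => exact ⟨1, one_mem _, by simp⟩
    | mul x y _ _ hx hy =>
      obtain ⟨a, ha, rfl⟩ := hx
      obtain ⟨b, hb, rfl⟩ := hy
      exact ⟨a * b, mul_mem ha hb, by simp⟩
  obtain ⟨B, hB, hBA⟩ := key _ hA
  rwa [← Subtype.ext hBA]

lemma map_tv {S : Type*} [CommRing S] (f : R →+* S) {i j : Fin n} (h : i ≠ j) (c : R) :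
    SpecialLinearGroup.map f (SpecialLinearGroup.transvection h c) =
      SpecialLinearGroup.transvection h (f c) := by
  apply Subtype.ext
  ext a b
  simp [SpecialLinearGroup.transvection_coe, Matrix.single_apply, one_apply, apply_ite f]

lemma map_mem {S : Type*} [CommRing S] (f : R →+* S) {A : SpecialLinearGroup (Fin n) R}
    (hA : A ∈ EG R n) : SpecialLinearGroup.map f A ∈ EG S n := by
  have : EG R n ≤ (EG S n).comap (SpecialLinearGroup.map f) := by
    apply EG_le
    intro i j hij c
    rw [Subgroup.mem_comap, map_tv]
    exact tv_mem _ _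
  exact this hA

lemma local_EG [IsLocalRing R] (A : SpecialLinearGroup (Fin n) R) : A ∈ EG R n :=
  local_mem Finset.univ A.1 A.2 (by simp)

/-- conjugates of transvections are rank one perturbations -/
lemma conj_eq (g : SpecialLinearGroup (Fin n) R) {i j : Fin n} (h : i ≠ j) (c : R) :
    ((g * SpecialLinearGroup.transvection h c * g⁻¹ : SpecialLinearGroup (Fin n) R) :
      Matrix (Fin n) (Fin n) R) =
    1 + vecMulVec (g.1.col i) (c • (g⁻¹).1.row j) := by
  have h2 : g.1 * (g⁻¹).1 = 1 := congrArg Subtype.val (mul_inv_cancel g)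
  change g.1 * (1 + Matrix.single i j c) * (g⁻¹).1 = _
  rw [mul_add, add_mul, mul_one, h2, single_eq', mul_vecMulVec, vecMulVec_mul]
  congr 2
  · simp
  · ext a; simp

lemma row_col (g : SpecialLinearGroup (Fin n) R) (i j : Fin n) :
    (g⁻¹).1.row j ⬝ᵥ g.1.col i = (1 : Matrix (Fin n) (Fin n) R) j i := by
  have h2 : (g⁻¹).1 * g.1 = 1 := congrArg Subtype.val (inv_mul_cancel g)
  rw [← h2]; rfl

lemma EG_normal (hn : 3 ≤ n) : (EG R n).Normal := by
  constructor
  intro x hx g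
  have : EG R n ≤ (EG R n).comap (MulAut.conj g).toMonoidHom := by
    apply EG_le
    intro i j hij c
    change g * SpecialLinearGroup.transvection hij c * g⁻¹ ∈ EG R n
    rw [mem_EG, conj_eq]
    have := rank_mem hn ((g⁻¹).1.row i) (g.1.col i) (c • (g⁻¹).1.row j)
      (by rw [smul_dotProduct, row_col, one_apply_ne hij.symm, smul_zero])
    rwa [row_col, one_apply_eq, one_smul] at this
  exact this hx

open scoped commutatorElement


lemma map_map' {S T : Type*} [CommRing S] [CommRing T] (f : R →+* S) (g : S →+* T) (x : Matrix.SpecialLinearGroup (Fin n) R) :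
    SpecialLinearGroup.map g (SpecialLinearGroup.map f x) =
      SpecialLinearGroup.map (g.comp f) x := rfl

lemma map_id' (x : Matrix.SpecialLinearGroup (Fin n) R) : SpecialLinearGroup.map (RingHom.id R) x = x := rfl

/-- the substitution `Y ↦ t Y` -/
noncomputable def sc (t : R) : R[X] →+* R[X] := Polynomial.eval₂RingHom C (C t * X)

@[simp] lemma sc_C (t a : R) : sc t (C a) = C a := by simp [sc]
@[simp] lemma sc_X (t : R) : sc t (X : R[X]) = C t * X := by simp [sc]

lemma sc_comp_C (t : R) : (sc t).comp C = C := by ext; simp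

lemma sc_sc (t u : R) : (sc t).comp (sc u) = sc (t * u) := by
  apply Polynomial.ringHom_ext
  · simp
  · simp; ring

lemma eval_sc (t : R) : (Polynomial.evalRingHom 0).comp (sc t) = Polynomial.evalRingHom 0 := by
  apply Polynomial.ringHom_ext
  · simp
  · simp

variable {L : Type*} [CommRing L] [Algebra R L]

lemma map_sc (t : R) : (Polynomial.mapRingHom (algebraMap R L)).comp (sc t) =
    (sc (algebraMap R L t)).comp (Polynomial.mapRingHom (algebraMap R L)) := by
  apply Polynomial.ringHom_ext
  · simp
  · simp

lemma map_sc_apply (t : R) (p : R[X]) : Polynomial.map (algebraMap R L) (sc t p) =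
    sc (algebraMap R L t) (Polynomial.map (algebraMap R L) p) :=
  RingHom.congr_fun (map_sc (L := L) t) p

/-- elements which become liftable to elementary ones after substitution -/
def LiftG (S : Submonoid R) (L : Type*) [CommRing L] [Algebra R L] (n : ℕ) :
    Subgroup (SpecialLinearGroup (Fin n) L[X]) where
  carrier := {x | ∃ t ∈ S, ∃ E ∈ EG R[X] n,
    SpecialLinearGroup.map (Polynomial.mapRingHom (algebraMap R L)) E =
      SpecialLinearGroup.map (sc (algebraMap R L t)) x}
  one_mem' := ⟨1, one_mem _, 1, one_mem _, by rw [map_one, map_one]⟩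
  inv_mem' := by
    rintro x ⟨t, ht, E, hE, h⟩
    exact ⟨t, ht, E⁻¹, inv_mem hE, by rw [map_inv, map_inv, h]⟩
  mul_mem' := by
    rintro x y ⟨t, ht, E, hE, h⟩ ⟨u, hu, F, hF, h'⟩
    refine ⟨t * u, mul_mem ht hu, SpecialLinearGroup.map (sc u) E * SpecialLinearGroup.map (sc t) F,
      mul_mem (map_mem _ hE) (map_mem _ hF), ?_⟩
    rw [map_mul, map_mul, map_map', map_map', map_sc, map_sc, ← map_map', ← map_map', h, h',
      map_map', map_map', sc_sc, sc_sc, map_mul, mul_comm (algebraMap R L t) (algebraMap R L u)]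

lemma gen_mem (hn : 3 ≤ n) (S : Submonoid R) [IsLocalization S L] (g : Matrix.SpecialLinearGroup (Fin n) L[X]) {i j : Fin n}
    (hij : i ≠ j) (f : L[X]) :
    g * SpecialLinearGroup.transvection hij (X * f) * g⁻¹ ∈ LiftG S L n := by
  let _ := Polynomial.algebra R L
  have : IsLocalization (S.map C) L[X] := Polynomial.isLocalization S L
  have halg : ∀ p : R[X], algebraMap R[X] L[X] p = Polynomial.map (algebraMap R L) p :=
    fun _ => rfl
  set v := g.1.col i with hv
  set w := (g⁻¹).1.row j with hw
  set u := (g⁻¹).1.row i with hu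
  have huv : u ⬝ᵥ v = 1 := by rw [hu, hv, row_col, one_apply_eq]
  have hwv : w ⬝ᵥ v = 0 := by rw [hw, hv, row_col, one_apply_ne hij.symm]
  obtain ⟨⟨_, s, hs, rfl⟩, hb⟩ := IsLocalization.exist_integer_multiples_of_finite (S.map C)
    (Sum.elim v (Sum.elim w (Sum.elim u (fun _ : Unit => f))))
  have hV : ∀ a, ∃ p : R[X], Polynomial.map (algebraMap R L) p = C (algebraMap R L s) * v a := by
    intro a; obtain ⟨p, hp⟩ := hb (Sum.inl a)
    refine ⟨p, ?_⟩; rw [← halg, hp, Algebra.smul_def, halg]; simp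
  have hW : ∀ a, ∃ p : R[X], Polynomial.map (algebraMap R L) p = C (algebraMap R L s) * w a := by
    intro a; obtain ⟨p, hp⟩ := hb (Sum.inr (Sum.inl a))
    refine ⟨p, ?_⟩; rw [← halg, hp, Algebra.smul_def, halg]; simp
  have hU : ∀ a, ∃ p : R[X], Polynomial.map (algebraMap R L) p = C (algebraMap R L s) * u a := by
    intro a; obtain ⟨p, hp⟩ := hb (Sum.inr (Sum.inr (Sum.inl a)))
    refine ⟨p, ?_⟩; rw [← halg, hp, Algebra.smul_def, halg]; simp
  obtain ⟨f', hf'⟩ : ∃ p : R[X], Polynomial.map (algebraMap R L) p = C (algebraMap R L s) * f := by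
    obtain ⟨p, hp⟩ := hb (Sum.inr (Sum.inr (Sum.inr ())))
    refine ⟨p, ?_⟩; rw [← halg, hp, Algebra.smul_def, halg]; simp
  choose v' hv' using hV
  choose w' hw' using hW
  choose u' hu' using hU
  have h0 : algebraMap R[X] L[X] (w' ⬝ᵥ v') = 0 := by
    have : algebraMap R[X] L[X] (w' ⬝ᵥ v') = C (algebraMap R L s) ^ 2 * (w ⬝ᵥ v) := by
      simp only [dotProduct, map_sum, map_mul]
      simp only [halg, hv', hw', Finset.mul_sum]
      exact Finset.sum_congr rfl fun _ _ => by ring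
    rw [this, hwv, mul_zero]
  obtain ⟨⟨_, s', hs', rfl⟩, h0'⟩ := (IsLocalization.map_eq_zero_iff (S.map C) L[X] _).1 h0
  simp only [MonoidHom.coe_coe] at h0'
  set t := s ^ 5 * s' with ht
  have hmem := rank_mem hn (fun a => sc t (u' a)) (fun a => sc t (v' a))
    (fun a => X * sc t f' * sc t (C s' * w' a)) (by
      have : (fun a => X * sc t f' * sc t (C s' * w' a)) ⬝ᵥ (fun a => sc t (v' a)) =
          X * sc t f' * sc t (C s' * (w' ⬝ᵥ v')) := by
        simp only [dotProduct, map_sum, map_mul, Finset.mul_sum]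
        exact Finset.sum_congr rfl fun _ _ => by ring
      rw [this, h0']; simp)
  refine ⟨t, mul_mem (pow_mem hs 5) hs', ⟨_, det_mem hmem⟩, hmem, ?_⟩
  have huv' : Polynomial.map (algebraMap R L) ((fun a => sc t (u' a)) ⬝ᵥ (fun a => sc t (v' a))) =
      C (algebraMap R L s) ^ 2 := by
    have : (fun a => sc t (u' a)) ⬝ᵥ (fun a => sc t (v' a)) = sc t (u' ⬝ᵥ v') := by
      simp [dotProduct]
    rw [this, map_sc_apply, ← halg]
    have : algebraMap R[X] L[X] (u' ⬝ᵥ v') = C (algebraMap R L s) ^ 2 * (u ⬝ᵥ v) := by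
      simp only [dotProduct, map_sum, map_mul]
      simp only [halg, hv', hu', Finset.mul_sum]
      exact Finset.sum_congr rfl fun _ _ => by ring
    rw [this, huv]; simp
  apply Subtype.ext
  ext1 a b
  change Polynomial.map (algebraMap R L) (((1 : Matrix (Fin n) (Fin n) R[X]) + _) a b) =
    sc (algebraMap R L t) ((g * SpecialLinearGroup.transvection hij (X * f) * g⁻¹).1 a b)
  rw [conj_eq]
  simp only [Matrix.add_apply, vecMulVec_apply, Pi.smul_apply, smul_eq_mul, Polynomial.map_add,
    Polynomial.map_mul, huv', map_sc_apply, hv', hw', hf', map_add, map_mul, sc_C, sc_X,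
    Polynomial.map_X, Polynomial.map_C]
  rw [← hv, ← hw]
  congr 1
  · by_cases hab : a = b
    · subst hab; simp
    · simp [one_apply_ne hab]
  · rw [ht]; simp only [map_mul, map_pow]; ring

/-- relative elementary group -/
noncomputable def NG (L : Type*) [CommRing L] (n : ℕ) : Subgroup (SpecialLinearGroup (Fin n) L[X]) :=
  Subgroup.normalClosure {x | ∃ (i j : Fin n) (hij : i ≠ j) (f : L[X]),
    x = SpecialLinearGroup.transvection hij (X * f)}

instance : (NG L n).Normal := Subgroup.normalClosure_normal

lemma NG_le (hn : 3 ≤ n) (S : Submonoid R) [IsLocalization S L] : NG L n ≤ LiftG S L n := by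
  rw [NG, Subgroup.normalClosure, Subgroup.closure_le]
  intro x hx
  obtain ⟨a, ⟨i, j, hij, f, rfl⟩, hc⟩ := Group.mem_conjugatesOfSet_iff.1 hx
  obtain ⟨c, rfl⟩ := isConj_iff.1 hc
  exact gen_mem hn S c hij f

lemma mem_NG {x : Matrix.SpecialLinearGroup (Fin n) R[X]} (hx : x ∈ EG R[X] n)
    (h0 : SpecialLinearGroup.map (Polynomial.evalRingHom 0) x = 1) : x ∈ NG R n := by
  have : EG R[X] n ≤ MonoidHom.eqLocus (QuotientGroup.mk' (NG R n))
      ((QuotientGroup.mk' (NG R n)).comp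
        (SpecialLinearGroup.map (C.comp (Polynomial.evalRingHom 0)))) := by
    apply EG_le
    intro i j hij c
    change QuotientGroup.mk' (NG R n) _ = QuotientGroup.mk' (NG R n) _
    rw [map_tv]
    have h1 : SpecialLinearGroup.transvection hij c = SpecialLinearGroup.transvection hij
        ((C.comp (Polynomial.evalRingHom 0)) c) *
        SpecialLinearGroup.transvection hij (X * c.divX) := by
      rw [← SpecialLinearGroup.transvection_add]
      congr 1
      conv_lhs => rw [← Polynomial.X_mul_divX_add c]
      simp [Polynomial.coeff_zero_eq_eval_zero, add_comm]
    have h2 : QuotientGroup.mk' (NG R n) (SpecialLinearGroup.transvection hij (X * c.divX)) = 1 :=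
      (QuotientGroup.eq_one_iff _).2 (Subgroup.subset_normalClosure ⟨i, j, hij, _, rfl⟩)
    rw [h1, map_mul, h2, mul_one]
  have h1 := this hx
  change QuotientGroup.mk' (NG R n) _ = QuotientGroup.mk' (NG R n) _ at h1
  rw [← map_map', h0, map_one, map_one] at h1
  exact (QuotientGroup.eq_one_iff _).1 h1

lemma comm_NG (hn : 3 ≤ n) (h : Matrix.SpecialLinearGroup (Fin n) R[X])
    (h0 : SpecialLinearGroup.map (Polynomial.evalRingHom 0) h = 1) {g : Matrix.SpecialLinearGroup (Fin n) R} (hg : g ∈ EG R n) :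
    ⁅SpecialLinearGroup.map C g, h⁆ ∈ NG R n := by
  have : EG R n ≤ (Subgroup.centralizer {QuotientGroup.mk' (NG R n) h}).comap
      ((QuotientGroup.mk' (NG R n)).comp (SpecialLinearGroup.map C)) := by
    apply EG_le
    intro i j hij c
    have h1 : ⁅SpecialLinearGroup.transvection hij (C c), h⁆ ∈ NG R n := by
      apply mem_NG
      · rw [commutatorElement_def, mul_assoc, mul_assoc]
        refine mul_mem (tv_mem _ _) ?_
        rw [← mul_assoc]
        exact (EG_normal hn).conj_mem _ (inv_mem (tv_mem _ _)) h
      · rw [map_commutatorElement, h0]; simp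
    rw [Subgroup.mem_comap, MonoidHom.comp_apply, map_tv, Subgroup.mem_centralizer_singleton_iff]
    have h2 := (QuotientGroup.eq_one_iff (N := NG R n) _).2 h1
    change QuotientGroup.mk' (NG R n) _ = 1 at h2
    rw [map_commutatorElement, commutatorElement_eq_one_iff_mul_comm] at h2
    first | exact h2 | exact h2.symm
  have h1 := this hg
  rw [Subgroup.mem_comap, MonoidHom.comp_apply, Subgroup.mem_centralizer_singleton_iff] at h1
  apply (QuotientGroup.eq_one_iff (N := NG R n) _).1
  change QuotientGroup.mk' (NG R n) _ = 1
  rw [map_commutatorElement, commutatorElement_eq_one_iff_mul_comm]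
  first | exact h1 | exact h1.symm

lemma sc_kill (S : Submonoid R) [IsLocalization S L] (p : R[X])
    (hp : Polynomial.map (algebraMap R L) p = 0) (h0 : Polynomial.eval 0 p = 0) :
    ∃ s ∈ S, sc s p = 0 := by
  let _ := Polynomial.algebra R L
  have : IsLocalization (S.map C) L[X] := Polynomial.isLocalization S L
  obtain ⟨⟨_, s, hs, rfl⟩, h⟩ := (IsLocalization.map_eq_zero_iff (S.map C) L[X] p).1 hp
  simp only [MonoidHom.coe_coe] at h
  refine ⟨s, hs, ?_⟩
  have hpx : p = X * p.divX := by
    conv_lhs => rw [← Polynomial.X_mul_divX_add p]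
    rw [Polynomial.coeff_zero_eq_eval_zero, h0]; simp
  have h1 : X * (C s * p.divX) = 0 := by
    rw [← h]; conv_rhs => rw [hpx]
    ring
  have h2 : C s * p.divX = 0 := by
    ext k
    have := congrArg (fun q => Polynomial.coeff q (k+1)) h1
    simpa using this
  rw [hpx, map_mul, sc_X]
  have := congrArg (sc s) h2
  rw [map_mul, sc_C, map_zero] at this
  rw [mul_right_comm, this, zero_mul]

lemma sc_eq (S : Submonoid R) [IsLocalization S L] (D E : Matrix.SpecialLinearGroup (Fin n) R[X])
    (h : SpecialLinearGroup.map (Polynomial.mapRingHom (algebraMap R L)) D =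
      SpecialLinearGroup.map (Polynomial.mapRingHom (algebraMap R L)) E)
    (h0 : SpecialLinearGroup.map (Polynomial.evalRingHom 0) D =
      SpecialLinearGroup.map (Polynomial.evalRingHom 0) E) :
    ∃ s ∈ S, SpecialLinearGroup.map (sc s) D = SpecialLinearGroup.map (sc s) E := by
  have key : ∀ x : Fin n × Fin n, ∃ s ∈ S, sc s (D.1 x.1 x.2 - E.1 x.1 x.2) = 0 := by
    intro x
    apply sc_kill (L := L) S
    · have := congrFun (congrFun (congrArg Subtype.val h) x.1) x.2
      rw [Polynomial.map_sub]
      exact sub_eq_zero.2 this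
    · have := congrFun (congrFun (congrArg Subtype.val h0) x.1) x.2
      rw [Polynomial.eval_sub]
      exact sub_eq_zero.2 this
  choose s hs hs' using key
  refine ⟨∏ x, s x, prod_mem fun x _ => hs x, ?_⟩
  apply Subtype.ext
  ext1 a b
  change sc _ (D.1 a b) = sc _ (E.1 a b)
  rw [← sub_eq_zero, ← map_sub, ← Finset.prod_erase_mul _ _ (Finset.mem_univ (a, b)), ← sc_sc,
    RingHom.comp_apply, hs' (a, b), map_zero]

lemma core (hn : 3 ≤ n) (S : Submonoid R) [IsLocalization S L] (β : Matrix.SpecialLinearGroup (Fin n) R)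
    (hβ : SpecialLinearGroup.map (algebraMap R L) β ∈ EG L n) (h : Matrix.SpecialLinearGroup (Fin n) R[X])
    (h0 : SpecialLinearGroup.map (Polynomial.evalRingHom 0) h = 1) :
    ∃ t ∈ S, ⁅SpecialLinearGroup.map C β, SpecialLinearGroup.map (sc t) h⁆ ∈ EG R[X] n := by
  set φ := Polynomial.mapRingHom (algebraMap R L) with hφ
  have hev : ∀ x : Matrix.SpecialLinearGroup (Fin n) R[X], SpecialLinearGroup.map (Polynomial.evalRingHom 0)
      (SpecialLinearGroup.map φ x) = SpecialLinearGroup.map (algebraMap R L)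
        (SpecialLinearGroup.map (Polynomial.evalRingHom 0) x) := by
    intro x
    rw [map_map', map_map']
    congr 2
    apply Polynomial.ringHom_ext <;> simp [hφ]
  have hC : ∀ x : Matrix.SpecialLinearGroup (Fin n) R, SpecialLinearGroup.map φ (SpecialLinearGroup.map C x) =
      SpecialLinearGroup.map C (SpecialLinearGroup.map (algebraMap R L) x) := by
    intro x
    rw [map_map', map_map']
    congr 2
    ext; simp [hφ]
  have h1 := comm_NG hn (SpecialLinearGroup.map φ h) (by rw [hev, h0, map_one]) hβ
  obtain ⟨t, ht, E, hE, hEx⟩ := NG_le hn S h1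
  set D := ⁅SpecialLinearGroup.map C β, SpecialLinearGroup.map (sc t) h⁆ with hD
  have hED : SpecialLinearGroup.map φ E = SpecialLinearGroup.map φ D := by
    rw [hEx, hD, map_commutatorElement, map_commutatorElement, hC, map_map' _ (sc _),
      map_map' _ (sc _), map_map' (sc t), hφ, map_sc, sc_comp_C]
  have hD0 : SpecialLinearGroup.map (Polynomial.evalRingHom 0) D = 1 := by
    rw [hD, map_commutatorElement, map_map' (sc t), eval_sc, h0]; simp
  set E0 := SpecialLinearGroup.map C (SpecialLinearGroup.map (Polynomial.evalRingHom 0) E) with hE0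
  have hE0m : E0 ∈ EG R[X] n := map_mem _ (map_mem _ hE)
  have hE01 : SpecialLinearGroup.map φ E0 = 1 := by
    rw [hE0, hC, ← hev, hED, hev, hD0, map_one, map_one]
  have hE02 : SpecialLinearGroup.map (Polynomial.evalRingHom 0) E0 =
      SpecialLinearGroup.map (Polynomial.evalRingHom 0) E := by
    rw [hE0, map_map']
    have : (Polynomial.evalRingHom (0 : R)).comp C = RingHom.id R := by ext; simp
    rw [this, map_id']
  obtain ⟨s, hs, hs'⟩ := sc_eq (L := L) S D (E0⁻¹ * E)
    (by
      change SpecialLinearGroup.map φ D = SpecialLinearGroup.map φ (E0⁻¹ * E)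
      rw [map_mul, map_inv, hE01, hED]; simp)
    (by rw [map_mul, map_inv, hE02, hD0]; simp)
  refine ⟨s * t, mul_mem hs ht, ?_⟩
  have := map_mem (sc s) (mul_mem (inv_mem hE0m) hE)
  rw [← hs', hD, map_commutatorElement, map_map', map_map', sc_comp_C, sc_sc] at this
  exact this

lemma main (hn : 3 ≤ n) (γ : Matrix.SpecialLinearGroup (Fin n) R[X]) (β : Matrix.SpecialLinearGroup (Fin n) R)
    (h0 : SpecialLinearGroup.map (Polynomial.evalRingHom 0) γ = 1) :
    ⁅β, SpecialLinearGroup.map (Polynomial.evalRingHom 1) γ⁆ ∈ EG R n := by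
  have : (EG R n).Normal := EG_normal hn
  let Z : Subgroup (Matrix.SpecialLinearGroup (Fin n) R) := (Subgroup.centralizer {QuotientGroup.mk' (EG R n) β}).comap
    (QuotientGroup.mk' (EG R n))
  have hZ : ∀ x, x ∈ Z ↔ ⁅β, x⁆ ∈ EG R n := by
    intro x
    rw [Subgroup.mem_comap, Subgroup.mem_centralizer_singleton_iff,
      ← QuotientGroup.eq_one_iff (N := EG R n)]
    change _ ↔ QuotientGroup.mk' (EG R n) _ = 1
    rw [map_commutatorElement, commutatorElement_eq_one_iff_mul_comm]
    first | exact Iff.rfl | exact eq_comm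
  let P : R → Matrix.SpecialLinearGroup (Fin n) R := fun a => SpecialLinearGroup.map (Polynomial.evalRingHom a) γ
  let J : Ideal R :=
    { carrier := {s | ∀ a c, P a ∈ Z → P (a + s * c) ∈ Z}
      zero_mem' := by intro a c h; simpa using h
      add_mem' := by
        intro s t hs ht a c h
        have := ht _ c (hs a c h)
        rwa [add_assoc, ← add_mul] at this
      smul_mem' := by
        intro r s hs a c h
        have := hs a (r * c) h
        rwa [show s * (r * c) = r • s * c by rw [smul_eq_mul]; ring] at this }
  have hJ : J = ⊤ := by
    by_contra hJ
    obtain ⟨m, hm, hJm⟩ := Ideal.exists_le_maximal J hJ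
    have := hm.isPrime
    let L := Localization.AtPrime m
    let _ := Polynomial.algebra R L
    have : IsLocalization (m.primeCompl.map C) L[X] := Polynomial.isLocalization m.primeCompl L
    let f1 : R[X] →+* R[X][X] := Polynomial.eval₂RingHom (C.comp C) (C X + X)
    have hf1 : (Polynomial.evalRingHom 0).comp f1 = RingHom.id R[X] := by
      apply Polynomial.ringHom_ext <;> simp [f1]
    have hf2 : (Polynomial.evalRingHom (0 : R[X])).comp C = RingHom.id R[X] := by
      apply Polynomial.ringHom_ext <;> simp
    obtain ⟨_, ⟨t, ht, rfl⟩, hc⟩ := core (L := L[X]) hn (m.primeCompl.map C)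
      (SpecialLinearGroup.map C β)
      (by
        have h1 : (algebraMap R[X] L[X]).comp C = C.comp (algebraMap R L) := by
          ext x; change (Polynomial.map (algebraMap R L) (C x)).coeff _ = _; simp
        rw [map_map', h1, ← map_map']
        exact map_mem _ (local_EG _))
      (SpecialLinearGroup.map f1 γ * (SpecialLinearGroup.map C γ)⁻¹)
      (by rw [map_mul, map_inv, map_map', map_map', hf1, hf2, mul_inv_cancel])
    apply ht
    apply hJm
    intro a c ha
    have h2 := map_mem ((Polynomial.evalRingHom a).comp (Polynomial.evalRingHom (C c))) hc
    rw [map_commutatorElement, map_mul, map_inv, map_mul, map_inv, map_map', map_map', map_map',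
      map_map', map_map', map_map'] at h2
    have e1 : ((((Polynomial.evalRingHom a).comp (Polynomial.evalRingHom (C c))).comp C).comp C) =
        RingHom.id R := by ext; simp
    have e2 : (((Polynomial.evalRingHom a).comp (Polynomial.evalRingHom (C c))).comp
        ((sc (C t)).comp f1)) = Polynomial.evalRingHom (a + t * c) := by
      apply Polynomial.ringHom_ext <;> simp [f1]
    have e3 : (((Polynomial.evalRingHom a).comp (Polynomial.evalRingHom (C c))).comp
        ((sc (C t)).comp C)) = Polynomial.evalRingHom a := by
      apply Polynomial.ringHom_ext <;> simp
    simp only [← RingHom.comp_assoc] at h2 e1 e2 e3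
    change ⁅SpecialLinearGroup.map _ β, _⁆ ∈ _ at h2
    erw [e1, e2, e3, map_id'] at h2
    have h3 := mul_mem ((hZ _).2 h2) ha
    rwa [inv_mul_cancel_right] at h3
  have h1 : (1 : R) ∈ J := hJ ▸ Submodule.mem_top
  have h2 := h1 0 1 (by change SpecialLinearGroup.map _ γ ∈ Z; rw [h0]; exact one_mem _)
  rw [zero_add, one_mul] at h2
  exact (hZ _).1 h2

lemma main' (hn : 3 ≤ n) (α β : Matrix.SpecialLinearGroup (Fin n) R) (h : HomotopicToId α.1) : ⁅β, α⁆ ∈ EG R n := by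
  obtain ⟨γ, hd, h0, h1⟩ := h
  have := main hn ⟨γ, hd⟩ β (Subtype.ext h0)
  have h2 : SpecialLinearGroup.map (Polynomial.evalRingHom 1) ⟨γ, hd⟩ = α := Subtype.ext h1
  rwa [h2] at this

end HC

open scoped commutatorElement

/-- homotopy and commutativity principle for linear groups. -/
theorem stmt3 {R : Type*} [CommRing R] [Nontrivial R] {n : ℕ} (hn : 3 ≤ n)
    (α β : Matrix (Fin n) (Fin n) R) (hα : α.det = 1) (hβ : β.det = 1)
    (hhom : HomotopicToId α ∨ HomotopicToId β) :
    ∃ ε ∈ ElemGroup R n, α * β = β * α * ε := by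
  let a : SpecialLinearGroup (Fin n) R := ⟨α, hα⟩
  let b : SpecialLinearGroup (Fin n) R := ⟨β, hβ⟩
  have h : ⁅a, b⁆ ∈ HC.EG R n := by
    rcases hhom with h | h
    · rw [← commutatorElement_inv]
      exact inv_mem (HC.main' hn a b h)
    · exact HC.main' hn b a h
  have h2 := (HC.EG_normal hn).conj_mem _ h (b * a)⁻¹
  refine ⟨_, h2, ?_⟩
  have h3 : a * b = b * a * ((b * a)⁻¹ * ⁅a, b⁆ * (b * a)⁻¹⁻¹) := by
    rw [commutatorElement_def]; group
  exact congrArg Subtype.val h3
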